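/- Elliptic Jackson summation (Frenkel–Turaev): for every integer k ≥ 0 and all α, β, γ, z ∈ ℂ such that every bracket appearing in a denominator is nonzero, one has ₁₀V₉(β−γ−k; −k, α−γ, −α−γ+1−k, β+rz, β−rz) = [γ−β, γ+β, α+rz, α−rz]_k / [α−β, α+β, γ+rz, γ−rz]_k. -/

import Mathlib

noncomputable section

open Complex Finset

namespace Ell

/-- `x^s = exp(-iπ s /(r τ))`. -/
def xp (τ : ℂ) (r : ℝ) (s : ℂ) : ℂ :=
  Complex.exp (-Complex.I * (Real.pi : ℂ) * s / ((r : ℂ) * τ))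

/-- `Θ_p(z) = ∏_{j ≥ 0} (1 - z p^j)(1 - p^{j+1}/z)(1 - p^{j+1})`. -/
def Theta (p z : ℂ) : ℂ :=
  ∏' j : ℕ, ((1 - z * p ^ j) * (1 - p ^ (j + 1) / z) * (1 - p ^ (j + 1)))

/-- The bracket `[u] = x^{u²/r - u} Θ_p(x^{2u})` with `p = x^{2r}`. -/
def br (τ : ℂ) (r : ℝ) (u : ℂ) : ℂ :=
  xp τ r (u ^ 2 / (r : ℂ) - u) * Theta (xp τ r (2 * (r : ℂ))) (xp τ r (2 * u))

/-- Elliptic shifted factorial `[u]_n = ∏_{j=0}^{n-1} [u+j]`. -/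
def brF (τ : ℂ) (r : ℝ) (u : ℂ) (n : ℕ) : ℂ :=
  ∏ j ∈ Finset.range n, br τ r (u + (j : ℂ))

/-- Elliptic binomial coefficient `C_n^k(α,β,γ)`. -/
def Cnk (τ : ℂ) (r : ℝ) (k n : ℕ) (α β γ : ℂ) : ℂ :=
  brF τ r 1 k / (brF τ r 1 n * brF τ r 1 (k - n)) *
    (brF τ r (α - γ) n * brF τ r (α + γ + (k : ℂ) - (n : ℂ)) n *
      brF τ r (α - β) (k - n) * brF τ r (α + β + (n : ℂ)) (k - n)) /
    (brF τ r (β - γ + (n : ℂ) - (k : ℂ)) n * brF τ r (γ - β - (n : ℂ)) (k - n) *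
      brF τ r (β + γ) k)

/-- The elliptic 6j-symbol `R_n^m(α,β,γ,δ;k)`. -/
def Rnm (τ : ℂ) (r : ℝ) (k n m : ℕ) (α β γ δ : ℂ) : ℂ :=
  ∑ j ∈ Finset.range (min n m + 1),
    Cnk τ r n j α γ (β + (k : ℂ) - (n : ℂ)) * Cnk τ r (k - j) (m - j) β (γ + (j : ℂ)) δ

/-- Terminating very-well-poised elliptic hypergeometric sum with explicit
truncation `N`:  `Σ_{j=0}^N ([u₀+2j]/[u₀]) ([u₀]_j/[1]_j) ∏ᵢ [uᵢ]_j/[u₀+1-uᵢ]_j`. -/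
def Vsum (τ : ℂ) (r : ℝ) (u₀ : ℂ) (us : List ℂ) (N : ℕ) : ℂ :=
  ∑ j ∈ Finset.range (N + 1),
    br τ r (u₀ + 2 * (j : ℂ)) / br τ r u₀ * (brF τ r u₀ j / brF τ r 1 j) *
      (us.map fun ui => brF τ r ui j / brF τ r (u₀ + 1 - ui) j).prod

/-- "Every bracket appearing in a denominator of `C_n^k(·,β,γ)` is nonzero". -/
def CdenomNZ (τ : ℂ) (r : ℝ) (k n : ℕ) (β γ : ℂ) : Prop :=
  brF τ r 1 n ≠ 0 ∧ brF τ r 1 (k - n) ≠ 0 ∧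
    brF τ r (β - γ + (n : ℂ) - (k : ℂ)) n ≠ 0 ∧
    brF τ r (γ - β - (n : ℂ)) (k - n) ≠ 0 ∧ brF τ r (β + γ) k ≠ 0

/-- "Every bracket appearing in a denominator of `R_n^m(α,β,γ,δ;k)` is nonzero". -/
def RdenomNZ (τ : ℂ) (r : ℝ) (k n m : ℕ) (β γ δ : ℂ) : Prop :=
  ∀ j ≤ min n m,
    CdenomNZ τ r n j γ (β + (k : ℂ) - (n : ℂ)) ∧
      CdenomNZ τ r (k - j) (m - j) (γ + (j : ℂ)) δ

/-- Jacobi theta `ϑ₁(v|σ)`. -/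
def th1 (v σ : ℂ) : ℂ :=
  2 * Complex.exp (2 * (Real.pi : ℂ) * Complex.I * σ / 8) *
    (∏' n : ℕ, (1 - Complex.exp (2 * (Real.pi : ℂ) * Complex.I * σ) ^ (n + 1))) *
    Complex.sin ((Real.pi : ℂ) * v) *
    ∏' n : ℕ,
      (1 - 2 * Complex.exp (2 * (Real.pi : ℂ) * Complex.I * σ) ^ (n + 1) *
            Complex.cos (2 * (Real.pi : ℂ) * v) +
        Complex.exp (2 * (Real.pi : ℂ) * Complex.I * σ) ^ (2 * (n + 1)))

/-- Jacobi theta `ϑ₀(v|σ)`. -/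
def th0 (v σ : ℂ) : ℂ :=
  -Complex.I * Complex.exp ((Real.pi : ℂ) * Complex.I * (v + σ / 4)) * th1 (v + σ / 2) σ

/-- Jacobi theta `ϑ₂(v|σ)`. -/
def th2 (v σ : ℂ) : ℂ := th1 (v + 1 / 2) σ

/-- Jacobi theta `ϑ₃(v|σ)`. -/
def th3 (v σ : ℂ) : ℂ :=
  Complex.exp ((Real.pi : ℂ) * Complex.I * (v + σ / 4)) * th1 (v + (σ + 1) / 2) σ

/-- Intertwining vector component `ψ_ε(u)^a_b`, `ε ∈ {1, -1}`. -/
def psi (τ : ℂ) (r : ℝ) (u : ℂ) (ε : ℤ) (a b : ℤ) : ℂ :=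
  if ε = 1 then th0 ((((a : ℂ) - (b : ℂ)) * u + (a : ℂ)) / (2 * (r : ℂ))) (τ / 2)
  else th3 ((((a : ℂ) - (b : ℂ)) * u + (a : ℂ)) / (2 * (r : ℂ))) (τ / 2)

/-- The constant `C = x^{-r/4} e^{-iπ/4} τ^{1/2}`. -/
def Cc (τ : ℂ) (r : ℝ) : ℂ :=
  xp τ r (-(r : ℂ) / 4) * Complex.exp (-(Real.pi : ℂ) * Complex.I / 4) * τ ^ (1 / 2 : ℂ)

/-- Dual intertwining vector component `ψ*_ε(u)^a_b = -ε(a-b) C² ψ_{-ε}(u-1)^a_b/(2[b][u])`. -/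
def psiStar (τ : ℂ) (r : ℝ) (u : ℂ) (ε : ℤ) (a b : ℤ) : ℂ :=
  -(ε : ℂ) * ((a : ℂ) - (b : ℂ)) * Cc τ r ^ 2 * psi τ r (u - 1) (-ε) a b /
    (2 * br τ r (b : ℂ) * br τ r u)

/-- Sign attached to a boolean. -/
def sg (b : Bool) : ℤ := if b then 1 else -1

/-- Canonical path from `a`: up for `j ≤ n`, down afterwards. -/
def cpathZ (a n : ℤ) (j : ℕ) : ℤ := if (j : ℤ) ≤ n then a + j else a + 2 * n - j

/-- Admissibility: `a - b ∈ {-k, -k+2, …, k}`. -/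
def adm (k : ℕ) (a b : ℤ) : Prop := (a - b).natAbs ≤ k ∧ (a - b - (k : ℤ)) % 2 = 0

instance (k : ℕ) (a b : ℤ) : Decidable (adm k a b) := by unfold adm; infer_instance

/-- Fused intertwining vector component `ψ^{(k)}_μ(u)^a_b` (zero if `a,b` not admissible). -/
def psiF (τ : ℂ) (r : ℝ) (k : ℕ) (μ : ℤ) (u : ℂ) (a b : ℤ) : ℂ :=
  if adm k a b then
    ∑ ε ∈ Finset.univ.filter fun ε : Fin k → Bool => (∑ j, sg (ε j)) = μ,
      ∏ j : Fin k,
        psi τ r (u + (k : ℂ) - (((j : ℕ) + 1 : ℕ) : ℂ)) (sg (ε j))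
          (cpathZ a (((k : ℤ) - (a - b)) / 2) (j : ℕ))
          (cpathZ a (((k : ℤ) - (a - b)) / 2) ((j : ℕ) + 1))
  else 0

/-- Partial-sum path attached to a sign sequence `δ`, starting at `a`. -/
def spath (k : ℕ) (a : ℤ) (δ : Fin k → Bool) (j : ℕ) : ℤ :=
  a + ∑ i ∈ Finset.range j, if h : i < k then sg (δ ⟨i, h⟩) else 0

/-- Fused dual intertwining vector component `ψ*^{(k)}_μ(u)^b_a`
(sum over all admissible paths from `a` to `b`; zero if not admissible). -/
def psiStarF (τ : ℂ) (r : ℝ) (k : ℕ) (μ : ℤ) (u : ℂ) (b a : ℤ) : ℂ :=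
  if adm k a b then
    ∑ δ ∈ Finset.univ.filter fun δ : Fin k → Bool => (∑ j, sg (δ j)) = b - a,
      ∏ j : Fin k,
        psiStar τ r (u + (k : ℂ) - (((j : ℕ) + 1 : ℕ) : ℂ))
          (if ((j : ℕ) + 1 : ℤ) ≤ ((k : ℤ) + μ) / 2 then 1 else -1)
          (spath k a δ ((j : ℕ) + 1)) (spath k a δ (j : ℕ))
  else 0

/-- The `L`-matrix `L^{(k)}(a,b;c,d|u) = Σ_μ ψ*^{(k)}_μ(u)^d_c ψ^{(k)}_μ(u)^a_b`. -/
def Lk (τ : ℂ) (r : ℝ) (k : ℕ) (u : ℂ) (a b c d : ℤ) : ℂ :=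
  ∑ i ∈ Finset.range (k + 1),
    psiStarF τ r k ((k : ℤ) - 2 * (i : ℤ)) u d c * psiF τ r k ((k : ℤ) - 2 * (i : ℤ)) u a b

/-- Normalized face weight `W̄(a,b;d,c|u)` (arguments ordered (NW, NE; SW, SE)). -/
def Wb (τ : ℂ) (r : ℝ) (u : ℂ) (a b d c : ℤ) : ℂ :=
  if b = a + 1 ∧ d = a + 1 ∧ c = a + 2 then 1
  else if b = a - 1 ∧ d = a - 1 ∧ c = a - 2 then 1
  else if b = a + 1 ∧ d = a + 1 ∧ c = a then
    br τ r ((a : ℂ) - u) * br τ r 1 / (br τ r (a : ℂ) * br τ r (1 + u))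
  else if b = a - 1 ∧ d = a - 1 ∧ c = a then
    br τ r ((a : ℂ) + u) * br τ r 1 / (br τ r (a : ℂ) * br τ r (1 + u))
  else if b = a + 1 ∧ d = a - 1 ∧ c = a then
    br τ r ((a : ℂ) + 1) * br τ r u / (br τ r (a : ℂ) * br τ r (1 + u))
  else if b = a - 1 ∧ d = a + 1 ∧ c = a then
    br τ r ((a : ℂ) - 1) * br τ r u / (br τ r (a : ℂ) * br τ r (1 + u))
  else 0

/-- Sequence with prescribed endpoints `d`, `c` and free interior values `f`. -/
def seqI (k : ℕ) (d c : ℤ) (f : Fin (k - 1) → ℤ) (j : ℕ) : ℤ :=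
  if h0 : j = 0 then d
  else if hj : j < k then f ⟨j - 1, by omega⟩ else c

/-- Fused face weight `W^{(k,1)}(a,b;d,c|u)`. -/
def Wk1 (τ : ℂ) (r : ℝ) (k : ℕ) (u : ℂ) (a b d c : ℤ) : ℂ :=
  if adm k a b then
    ∑' f : Fin (k - 1) → ℤ,
      ∏ j ∈ Finset.range k,
        Wb τ r (u + (k : ℂ) - ((j : ℂ) + 1))
          (cpathZ a (((k : ℤ) - (a - b)) / 2) j)
          (cpathZ a (((k : ℤ) - (a - b)) / 2) (j + 1))
          (seqI k d c f j) (seqI k d c f (j + 1))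
  else 0

/-- Fused face weight `W^{(k,l)}(a,b;d,c|u)`. -/
def Wkl (τ : ℂ) (r : ℝ) (k l : ℕ) (u : ℂ) (a b d c : ℤ) : ℂ :=
  if adm l b c then
    ∑' g : Fin (l - 1) → ℤ,
      ∏ i ∈ Finset.range l,
        Wk1 τ r k (u - (l : ℂ) + ((i : ℂ) + 1))
          (seqI l a d g i) (cpathZ b (((l : ℤ) - (b - c)) / 2) i)
          (seqI l a d g (i + 1)) (cpathZ b (((l : ℤ) - (b - c)) / 2) (i + 1))
  else 0

/-- Eight-vertex weight `ā(u)`. -/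
def aw (τ : ℂ) (r : ℝ) (u : ℂ) : ℂ :=
  th2 (1 / (2 * (r : ℂ))) (τ / 2) * th2 (u / (2 * (r : ℂ))) (τ / 2) /
    (th2 0 (τ / 2) * th2 ((1 + u) / (2 * (r : ℂ))) (τ / 2))

/-- Eight-vertex weight `b̄(u)`. -/
def bw (τ : ℂ) (r : ℝ) (u : ℂ) : ℂ :=
  th2 (1 / (2 * (r : ℂ))) (τ / 2) * th1 (u / (2 * (r : ℂ))) (τ / 2) /
    (th2 0 (τ / 2) * th1 ((1 + u) / (2 * (r : ℂ))) (τ / 2))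

/-- Eight-vertex weight `c̄(u)`. -/
def cw (τ : ℂ) (r : ℝ) (u : ℂ) : ℂ :=
  th1 (1 / (2 * (r : ℂ))) (τ / 2) * th2 (u / (2 * (r : ℂ))) (τ / 2) /
    (th2 0 (τ / 2) * th1 ((1 + u) / (2 * (r : ℂ))) (τ / 2))

/-- Eight-vertex weight `d̄(u)`. -/
def dw (τ : ℂ) (r : ℝ) (u : ℂ) : ℂ :=
  -(th1 (1 / (2 * (r : ℂ))) (τ / 2) * th1 (u / (2 * (r : ℂ))) (τ / 2)) /
    (th2 0 (τ / 2) * th2 ((1 + u) / (2 * (r : ℂ))) (τ / 2))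

/-- The normalized eight-vertex `R`-matrix entry `R̄(u)_{(ε₁,ε₂),(ε₁',ε₂')}`. -/
def Rbar (τ : ℂ) (r : ℝ) (u : ℂ) (e1 e2 e1' e2' : ℤ) : ℂ :=
  if e1' = e1 ∧ e2' = e2 ∧ e1 = e2 then aw τ r u
  else if e1' = e1 ∧ e2' = e2 ∧ e1 = -e2 then bw τ r u
  else if e1' = e2 ∧ e2' = e1 ∧ e1 = -e2 then cw τ r u
  else if e1' = -e1 ∧ e2' = -e2 ∧ e1 = e2 then dw τ r u
  else 0

/-- Sklyanin standard-basis vector `v_+(z)`. -/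
def vp (τ z : ℂ) : ℂ := th3 (2 * z) (2 * τ) - th2 (2 * z) (2 * τ)

/-- Sklyanin standard-basis vector `v_-(z)`. -/
def vm (τ z : ℂ) : ℂ := th3 (2 * z) (2 * τ) + th2 (2 * z) (2 * τ)


/-- finite q-Pochhammer -/
def qp (p : ℂ) (n : ℕ) : ℂ := ∏ j ∈ Finset.range n, (1 - p ^ (j + 1))

def qR (p : ℂ) (m : ℤ) : ℂ := if m < 0 then 0 else (qp p m.toNat)⁻¹

lemma one_sub_pow_ne {p : ℂ} (hp : ‖p‖ < 1) (j : ℕ) : 1 - p ^ (j + 1) ≠ 0 := by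
  intro h
  have h1 : p ^ (j + 1) = 1 := (sub_eq_zero.mp h).symm
  have h2 : ‖p‖ ^ (j + 1) = 1 := by rw [← norm_pow, h1, norm_one]
  have h3 : ‖p‖ ^ (j + 1) < 1 := pow_lt_one₀ (norm_nonneg _) hp (by omega)
  linarith

lemma qp_ne {p : ℂ} (hp : ‖p‖ < 1) (n : ℕ) : qp p n ≠ 0 :=
  Finset.prod_ne_zero_iff.mpr fun j _ => one_sub_pow_ne hp j

lemma qR_rec {p : ℂ} (hp : ‖p‖ < 1) (m : ℤ) : qR p m * (1 - p ^ m) = qR p (m - 1) := by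
  unfold qR
  rcases lt_trichotomy m 0 with h | h | h
  · rw [if_pos h, if_pos (by omega)]; simp
  · subst h; simp
  · rw [if_neg (by omega), if_neg (by omega)]
    obtain ⟨n, rfl⟩ : ∃ n : ℕ, m = n + 1 := ⟨(m - 1).toNat, by omega⟩
    have e1 : ((n : ℤ) + 1).toNat = n + 1 := by omega
    have e2 : ((n : ℤ) + 1 - 1).toNat = n := by omega
    rw [e1, e2]
    have : qp p (n + 1) = qp p n * (1 - p ^ (n + 1)) := Finset.prod_range_succ _ _
    rw [this]
    have h1 := qp_ne hp n
    have h2 := one_sub_pow_ne hp n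
    have e3 : p ^ ((n : ℤ) + 1) = p ^ (n + 1) := by exact_mod_cast zpow_natCast p (n + 1)
    rw [e3]
    field_simp

lemma finite_triple {p z : ℂ} (hp : ‖p‖ < 1) (hp0 : p ≠ 0) (hz : z ≠ 0) (t : ℤ → ℂ)
    (ht0 : t 0 = 1) (ht : ∀ n, t (n + 1) = -(p ^ n * z * t n)) (N : ℕ) :
    HasSum (fun n : ℤ => qp p (2 * N) * qR p (N - n) * qR p (N + n) * t n)
      (∏ j ∈ Finset.range N, ((1 - z * p ^ j) * (1 - p ^ (j + 1) / z))) := by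
  induction N with
  | zero =>
    have : (fun n : ℤ => qp p (2 * 0) * qR p ((0 : ℕ) - n) * qR p ((0 : ℕ) + n) * t n)
        = fun n => if n = 0 then 1 else 0 := by
      funext n
      split_ifs with h
      · subst h; simp [qp, qR, ht0]
      · rcases lt_or_gt_of_ne h with h | h
        · have : qR p ((0 : ℕ) + n) = 0 := by unfold qR; rw [if_pos]; simpa using h
          rw [this]; ring
        · have : qR p ((0 : ℕ) - n) = 0 := by unfold qR; rw [if_pos]; simpa using h
          rw [this]; ring
    rw [this]
    simpa using hasSum_ite_eq (0 : ℤ) (1 : ℂ)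
  | succ N ih =>
    rw [Finset.prod_range_succ]
    set P := ∏ j ∈ Finset.range N, ((1 - z * p ^ j) * (1 - p ^ (j + 1) / z)) with hP
    have i1 := (Equiv.hasSum_iff (Equiv.subRight (1 : ℤ))).mpr ih
    have i2 := (Equiv.hasSum_iff (Equiv.addRight (1 : ℤ))).mpr ih
    have key := ((ih.mul_left (1 + p ^ (2 * N + 1))).sub (i1.mul_left (z * p ^ N))).sub
      (i2.mul_left (p ^ (N + 1) / z))
    have eP : P * ((1 - z * p ^ N) * (1 - p ^ (N + 1) / z)) =
      (1 + p ^ (2 * N + 1)) * P - z * p ^ N * P - p ^ (N + 1) / z * P := by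
      field_simp; ring
    rw [eP]
    refine Eq.subst (motive := fun f : ℤ → ℂ => HasSum f _) (funext fun n => Eq.symm ?_) key
    simp only [Function.comp_apply, Equiv.subRight_apply, Equiv.coe_addRight]
    have a1 := qR_rec hp ((N : ℤ) + 1 - n)
    have a2 := qR_rec hp ((N : ℤ) - n)
    have b1 := qR_rec hp ((N : ℤ) + 1 + n)
    have b2 := qR_rec hp ((N : ℤ) + n)
    have e1 : (N : ℤ) + 1 - n - 1 = N - n := by ring
    have e2 : (N : ℤ) - n - 1 = N - (n + 1) := by ring
    have e3 : (N : ℤ) + 1 + n - 1 = N + n := by ring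
    have e4 : (N : ℤ) + n - 1 = N + (n - 1) := by ring
    rw [e1] at a1
    rw [e2] at a2
    rw [e3] at b1
    rw [e4] at b2
    have e5 : (N : ℤ) - (n - 1) = N + 1 - n := by ring
    have e6 : (N : ℤ) + (n + 1) = N + 1 + n := by ring
    have e7 : ((N + 1 : ℕ) : ℤ) = N + 1 := by push_cast; rfl
    rw [e5, e6, e7, ← a2, ← b2, ← a1, ← b1, ht n]
    have t1 : t (n - 1) * z = -(p * (p ^ n)⁻¹ * t n) := by
      have := ht (n - 1)
      rw [sub_add_cancel] at this
      rw [this, zpow_sub_one₀ hp0]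
      have := zpow_ne_zero n hp0
      field_simp
    have q2 : qp p (2 * (N + 1)) = qp p (2 * N) * (1 - p ^ (2 * N + 1)) * (1 - p ^ (2 * N + 2)) := by
      unfold qp
      rw [show 2 * (N + 1) = 2 * N + 1 + 1 by ring, Finset.prod_range_succ, Finset.prod_range_succ]
    rw [q2]
    have hB := zpow_ne_zero n hp0
    have f1 : p ^ ((N : ℤ) + 1 - n) = p * p ^ N * (p ^ n)⁻¹ := by
      rw [zpow_sub₀ hp0, zpow_add_one₀ hp0, zpow_natCast]; field_simp
    have f2 : p ^ ((N : ℤ) - n) = p ^ N * (p ^ n)⁻¹ := by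
      rw [zpow_sub₀ hp0, zpow_natCast]; field_simp
    have f3 : p ^ ((N : ℤ) + 1 + n) = p * p ^ N * p ^ n := by
      rw [zpow_add₀ hp0, zpow_add_one₀ hp0, zpow_natCast]; ring
    have f4 : p ^ ((N : ℤ) + n) = p ^ N * p ^ n := by
      rw [zpow_add₀ hp0, zpow_natCast]
    rw [f1, f2, f3, f4]
    have g1 : p ^ (2 * N + 1) = p * (p ^ N) ^ 2 := by ring
    have g2 : p ^ (2 * N + 2) = p ^ 2 * (p ^ N) ^ 2 := by ring
    have g3 : p ^ (N + 1) = p * p ^ N := by ring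
    rw [g1, g2, g3]
    generalize qR p ((N : ℤ) + 1 - n) = X
    generalize qR p ((N : ℤ) + 1 + n) = Y
    generalize qp p (2 * N) = Q
    generalize p ^ N = A at *
    generalize p ^ n = B at *
    have t2 : ∀ c : ℂ, z * A * (c * t (n - 1)) = A * c * (-(p * B⁻¹ * t n)) := by
      intro c; rw [← t1]; ring
    rw [t2]
    field_simp
    ring

lemma tendsto_qp {p : ℂ} (hp : ‖p‖ < 1) :
    ∃ L : ℂ, L ≠ 0 ∧ Filter.Tendsto (qp p) Filter.atTop (nhds L) := by
  have hs : Summable fun n : ℕ => ‖-p ^ (n + 1)‖ := by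
    simpa using (summable_nat_add_iff 1).mpr (summable_geometric_of_lt_one (norm_nonneg _) hp)
  have hm := multipliable_one_add_of_summable hs
  refine ⟨∏' n : ℕ, (1 + -p ^ (n + 1)), ?_, ?_⟩
  · exact tprod_one_add_ne_zero_of_summable (f := fun n : ℕ => -p ^ (n + 1))
      (by intro i; simpa [← sub_eq_add_neg] using one_sub_pow_ne hp i) hs
  · refine hm.tendsto_prod_tprod_nat.congr fun n => ?_
    simp [qp, ← sub_eq_add_neg]

lemma tendsto_qR {p : ℂ} {L : ℂ} (hL : L ≠ 0)
    (h : Filter.Tendsto (qp p) Filter.atTop (nhds L)) :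
    Filter.Tendsto (qR p) Filter.atTop (nhds L⁻¹) := by
  have h1 : Filter.Tendsto (fun m : ℤ => (qp p m.toNat)⁻¹) Filter.atTop (nhds L⁻¹) :=
    (h.comp (Filter.tendsto_atTop_mono (fun m : ℤ => le_refl _)
      (Filter.tendsto_atTop.mpr fun b => by
        filter_upwards [Filter.eventually_ge_atTop (b : ℤ)] with m hm
        omega))).inv₀ hL
  refine h1.congr' ?_
  filter_upwards [Filter.eventually_ge_atTop (0 : ℤ)] with m hm
  unfold qR
  rw [if_neg (by omega)]

lemma bdd_qp {p : ℂ} {L : ℂ} 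
    (h : Filter.Tendsto (qp p) Filter.atTop (nhds L)) : ∃ C, ∀ n, ‖qp p n‖ ≤ C := by
  obtain ⟨C, hC⟩ := (Metric.isBounded_range_of_tendsto _ h).exists_norm_le
  exact ⟨C, fun n => hC _ ⟨n, rfl⟩⟩

lemma bdd_qR {p : ℂ} {L : ℂ} (hL : L ≠ 0)
    (h : Filter.Tendsto (qp p) Filter.atTop (nhds L)) : ∃ C, ∀ n, ‖qR p n‖ ≤ C := by
  have h1 : Filter.Tendsto (fun m : ℕ => (qp p m)⁻¹) Filter.atTop (nhds L⁻¹) := h.inv₀ hL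
  obtain ⟨C, hC⟩ := (Metric.isBounded_range_of_tendsto _ h1).exists_norm_le
  refine ⟨C, fun n => ?_⟩
  unfold qR
  split_ifs
  · simpa using (norm_nonneg _).trans (hC _ ⟨0, rfl⟩)
  · exact hC _ ⟨_, rfl⟩

lemma triple {p z : ℂ} (hp : ‖p‖ < 1) (hp0 : p ≠ 0) (hz : z ≠ 0) (t : ℤ → ℂ)
    (ht0 : t 0 = 1) (ht : ∀ n, t (n + 1) = -(p ^ n * z * t n)) (hs : Summable t) :
    Theta p z = ∑' n, t n := by
  obtain ⟨L, hL, hq⟩ := tendsto_qp hp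
  obtain ⟨C, hC⟩ := bdd_qp hq
  obtain ⟨D, hD⟩ := bdd_qR hL hq
  have hC0 : 0 ≤ C := (norm_nonneg _).trans (hC 0)
  have hD0 : 0 ≤ D := (norm_nonneg _).trans (hD 0)
  have lim1 : Filter.Tendsto (fun N : ℕ => ∑' n : ℤ,
      qp p N * (qp p (2 * N) * qR p (N - n) * qR p (N + n) * t n)) Filter.atTop
      (nhds (∑' n, t n)) := by
    refine tendsto_tsum_of_dominated_convergence (bound := fun n => C * (C * D * D * ‖t n‖)) 
      ((hs.norm.mul_left _).mul_left _) ?_ ?_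
    · intro n
      have c1 : Filter.Tendsto (fun N : ℕ => qp p (2 * N)) Filter.atTop (nhds L) :=
        hq.comp (Filter.tendsto_atTop_mono (fun N => by show N ≤ 2 * N; omega) Filter.tendsto_id)
      have c2 : Filter.Tendsto (fun N : ℕ => qR p (N - n)) Filter.atTop (nhds L⁻¹) :=
        (tendsto_qR hL hq).comp
          (Filter.tendsto_atTop_add_const_right _ (-n) tendsto_natCast_atTop_atTop)
      have c3 : Filter.Tendsto (fun N : ℕ => qR p (N + n)) Filter.atTop (nhds L⁻¹) :=
        (tendsto_qR hL hq).comp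
          (Filter.tendsto_atTop_add_const_right _ n tendsto_natCast_atTop_atTop)
      have := hq.mul (((c1.mul c2).mul c3).mul_const (t n))
      convert this using 2
      field_simp
    · refine Filter.Eventually.of_forall fun N n => ?_
      simp only [norm_mul]
      gcongr
      · exact hC _
      · exact hC _
      · exact hD _
      · exact hD _
  have lim2 : Filter.Tendsto (fun N : ℕ => ∏ j ∈ Finset.range N,
      ((1 - z * p ^ j) * (1 - p ^ (j + 1) / z) * (1 - p ^ (j + 1)))) Filter.atTop
      (nhds (Theta p z)) := by
    refine Multipliable.tendsto_prod_tprod_nat ?_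
    have sg : Summable fun n : ℕ => ‖p‖ ^ n := summable_geometric_of_lt_one (norm_nonneg _) hp
    have sg1 : Summable fun n : ℕ => ‖p‖ ^ (n + 1) := (summable_nat_add_iff 1).mpr sg
    have m1 := multipliable_one_add_of_summable (f := fun j : ℕ => -(z * p ^ j))
      (by simpa using sg.mul_left ‖z‖)
    have m2 := multipliable_one_add_of_summable (f := fun j : ℕ => -(p ^ (j + 1) / z))
      (by simpa using sg1.div_const ‖z‖)
    have m3 := multipliable_one_add_of_summable (f := fun j : ℕ => -(p ^ (j + 1)))
      (by simpa using sg1)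
    simpa [← sub_eq_add_neg] using (m1.mul m2).mul m3
  refine tendsto_nhds_unique lim2 (lim1.congr fun N => ?_)
  rw [tsum_mul_left, (finite_triple hp hp0 hz t ht0 ht N).tsum_eq, Finset.prod_mul_distrib (g := fun j => (1 - p ^ (j + 1))), mul_comm]
  rfl


lemma im_sigma {τ : ℂ} (hτ : 0 < τ.im) : 0 < (-1 / τ).im := by
  have h0 : τ ≠ 0 := by rintro rfl; simp at hτ
  rw [neg_div, Complex.neg_im, one_div, Complex.inv_im, neg_div, neg_neg]
  exact div_pos hτ (Complex.normSq_pos.mpr h0)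

lemma br_theta {τ : ℂ} {r : ℝ} (hτ : 0 < τ.im) (hr : 0 < r) (u : ℂ) :
    br τ r u = xp τ r (u ^ 2 / (r : ℂ) - u) *
      jacobiTheta₂ (-u / (r * τ) + 1 / 2 - (-1 / τ) / 2) (-1 / τ) := by
  have h0 : τ ≠ 0 := by rintro rfl; simp at hτ
  have hr0 : (r : ℂ) ≠ 0 := by exact_mod_cast hr.ne'
  have him := im_sigma hτ
  unfold br
  congr 1
  have hpe : xp τ r (2 * (r : ℂ)) = cexp (2 * Real.pi * I * (-1 / τ)) := by
    unfold xp; congr 1; field_simp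
  have hze : xp τ r (2 * u) = cexp (2 * Real.pi * I * (-u / (r * τ))) := by
    unfold xp; congr 1; field_simp
  rw [hpe, hze]
  refine triple ?_ (Complex.exp_ne_zero _) (Complex.exp_ne_zero _)
    (fun n => jacobiTheta₂_term n (-u / (r * τ) + 1 / 2 - (-1 / τ) / 2) (-1 / τ)) ?_ ?_
    ((summable_jacobiTheta₂_term_iff _ _).mpr him)
  · rw [Complex.norm_exp]
    rw [Real.exp_lt_one_iff]
    simp only [Complex.mul_re, Complex.mul_im, Complex.I_re, Complex.I_im, Complex.re_ofNat,
      Complex.im_ofNat, Complex.ofReal_re, Complex.ofReal_im]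
    have := Real.pi_pos
    nlinarith [mul_pos this him]
  · simp [jacobiTheta₂_term]
  · intro n
    simp only [jacobiTheta₂_term]
    rw [← Complex.exp_int_mul, ← Complex.exp_add, ← Complex.exp_add]
    have hneg : ∀ y : ℂ, -cexp y = cexp (Real.pi * I + y) := fun y => by
      rw [Complex.exp_add, Complex.exp_pi_mul_I, neg_one_mul]
    rw [hneg]
    congr 1
    push_cast
    field_simp
    ring

lemma summable_E {σ : ℂ} (hσ : 0 < σ.im) (s : ℂ) :
    Summable fun n : ℤ => ‖cexp (Real.pi * I * σ * (s + n) ^ 2)‖ := by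
  have h := (((summable_jacobiTheta₂_term_iff (σ * s) σ).mpr hσ).mul_left
    (cexp (Real.pi * I * σ * s ^ 2))).norm
  refine h.congr fun n => ?_
  congr 1
  rw [jacobiTheta₂_term, ← Complex.exp_add]
  congr 1
  ring

/-- The series appearing in the bracket. -/
def Gs (σ s : ℂ) : ℂ := ∑' n : ℤ, (-1 : ℂ) ^ n * cexp (Real.pi * I * σ * (s - 1 / 2 + n) ^ 2)

def As (σ s : ℂ) : ℂ := ∑' n : ℤ, cexp (Real.pi * I * (2 * σ) * (s + n) ^ 2)

lemma br_series {τ : ℂ} {r : ℝ} (hτ : 0 < τ.im) (hr : 0 < r) (u : ℂ) :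
    br τ r u = cexp (-(Real.pi * I * (-1 / τ) / 4)) * Gs (-1 / τ) (u / r) := by
  have h0 : τ ≠ 0 := by rintro rfl; simp at hτ
  have hr0 : (r : ℂ) ≠ 0 := by exact_mod_cast hr.ne'
  rw [br_theta hτ hr, jacobiTheta₂, Gs, ← tsum_mul_left, ← tsum_mul_left]
  refine tsum_congr fun n => ?_
  have hneg : (-1 : ℂ) ^ n = cexp (n * (Real.pi * I)) := by
    rw [Complex.exp_int_mul, Complex.exp_pi_mul_I]
  rw [jacobiTheta₂_term, xp, ← Complex.exp_add, hneg, ← Complex.exp_add, ← Complex.exp_add]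
  congr 1
  field_simp
  ring

def parityMap : (ℤ × ℤ) ⊕ (ℤ × ℤ) → ℤ × ℤ
  | .inl q => (q.1 + q.2, q.1 - q.2)
  | .inr q => (q.1 + q.2 + 1, q.1 - q.2)

lemma parityMap_bij : Function.Bijective parityMap := by
  constructor
  · rintro (⟨a, b⟩ | ⟨a, b⟩) (⟨c, d⟩ | ⟨c, d⟩) h <;>
      simp only [parityMap, Prod.mk.injEq] at h <;> simp <;> omega
  · rintro ⟨m, n⟩
    rcases Int.even_or_odd' (m - n) with ⟨l, h | h⟩
    · exact ⟨.inl (n + l, l), by simp only [parityMap, Prod.mk.injEq]; omega⟩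
    · exact ⟨.inr (n + l, l), by simp only [parityMap, Prod.mk.injEq]; omega⟩

lemma Gs_mul {σ : ℂ} (hσ : 0 < σ.im) (a x : ℂ) :
    Gs σ (a + x) * Gs σ (a - x) = As σ (a - 1 / 2) * As σ x - As σ a * As σ (x + 1 / 2) := by
  have h2 : 0 < (2 * σ).im := by simpa using hσ
  have hs : ∀ s, Summable fun n : ℤ =>
      ‖(-1 : ℂ) ^ n * cexp (Real.pi * I * σ * (s - 1 / 2 + n) ^ 2)‖ := by
    intro s
    refine (summable_E hσ (s - 1 / 2)).congr fun n => ?_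
    rw [norm_mul, norm_zpow]; simp
  have hA := summable_E h2
  unfold Gs As
  rw [tsum_mul_tsum_of_summable_norm (hs _) (hs _), tsum_mul_tsum_of_summable_norm (hA _) (hA _),
    tsum_mul_tsum_of_summable_norm (hA _) (hA _)]
  rw [← (Equiv.ofBijective _ parityMap_bij).tsum_eq]
  have hsum := (Equiv.ofBijective _ parityMap_bij).summable_iff.mpr
    (summable_mul_of_summable_norm (hs (a + x)) (hs (a - x)))
  erw [Summable.tsum_sum (hsum.comp_injective Sum.inl_injective)
    (hsum.comp_injective Sum.inr_injective)]
  refine Eq.trans ?_ (sub_eq_add_neg _ _).symm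
  rw [← tsum_neg]
  congr 1
  · refine tsum_congr fun q => ?_
    simp only [Function.comp_apply, Equiv.ofBijective_apply, parityMap]
    rw [mul_mul_mul_comm, ← zpow_add₀ (by norm_num), ← Complex.exp_add, ← Complex.exp_add,
      Even.neg_one_zpow ⟨q.1, by ring⟩, one_mul]
    congr 1
    push_cast
    ring
  · refine tsum_congr fun q => ?_
    simp only [Function.comp_apply, Equiv.ofBijective_apply, parityMap]
    rw [mul_mul_mul_comm, ← zpow_add₀ (by norm_num), ← Complex.exp_add, ← Complex.exp_add,
      Odd.neg_one_zpow ⟨q.1, by ring⟩, neg_one_mul]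
    congr 2
    push_cast
    ring

lemma As_add_one (σ s : ℂ) : As σ (s + 1) = As σ s := by
  unfold As
  rw [← (Equiv.addRight (1 : ℤ)).tsum_eq (fun n : ℤ => cexp (Real.pi * I * (2 * σ) * (s + n) ^ 2))]
  refine tsum_congr fun n => ?_
  simp only [Equiv.coe_addRight]
  push_cast
  congr 2
  ring

lemma br_rank2 {τ : ℂ} {r : ℝ} (hτ : 0 < τ.im) (hr : 0 < r) :
    ∃ A B : ℂ → ℂ, ∀ a x, br τ r (a + x) * br τ r (a - x) = B a * A x - A a * B x := by
  set c := cexp (-(Real.pi * I * (-1 / τ) / 4))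
  refine ⟨fun a => c * As (-1 / τ) (a / r), fun a => c * As (-1 / τ) (a / r + 1 / 2), fun a x => ?_⟩
  rw [br_series hτ hr, br_series hτ hr, add_div, sub_div, mul_mul_mul_comm, Gs_mul (im_sigma hτ)]
  have : As (-1 / τ) (a / r - 1 / 2) = As (-1 / τ) (a / r + 1 / 2) := by
    rw [← As_add_one]; congr 1; ring
  rw [this]
  ring

lemma br_plucker {τ : ℂ} {r : ℝ} (hτ : 0 < τ.im) (hr : 0 < r) (a b c d : ℂ) :
    br τ r (a + d) * br τ r (a - d) * (br τ r (b + c) * br τ r (b - c)) =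
    br τ r (b + d) * br τ r (b - d) * (br τ r (a + c) * br τ r (a - c)) -
    br τ r (c + d) * br τ r (c - d) * (br τ r (a + b) * br τ r (a - b)) := by
  obtain ⟨A, B, h⟩ := br_rank2 hτ hr
  simp only [h]
  ring

lemma br_neg {τ : ℂ} {r : ℝ} (hτ : 0 < τ.im) (hr : 0 < r) (u : ℂ) : br τ r (-u) = -br τ r u := by
  obtain ⟨A, B, h⟩ := br_rank2 hτ hr
  by_cases hz : ∀ w, br τ r w = 0
  · rw [hz, hz, neg_zero]
  · push Not at hz
    obtain ⟨w, hw⟩ := hz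
    have h1 := h ((w + u) / 2) ((w - u) / 2)
    have h2 := h ((w - u) / 2) ((w + u) / 2)
    rw [show (w + u) / 2 + (w - u) / 2 = w by ring, show (w + u) / 2 - (w - u) / 2 = u by ring] at h1
    rw [show (w - u) / 2 + (w + u) / 2 = w by ring, show (w - u) / 2 - (w + u) / 2 = -u by ring] at h2
    apply mul_left_cancel₀ hw
    rw [h2, mul_neg, h1]
    ring

lemma br_diff {τ : ℂ} {r : ℝ} (hτ : 0 < τ.im) (hr : 0 < r) : Differentiable ℂ (br τ r) := by
  have : br τ r = fun u => xp τ r (u ^ 2 / (r : ℂ) - u) *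
      jacobiTheta₂ (-u / (r * τ) + 1 / 2 - (-1 / τ) / 2) (-1 / τ) := funext (br_theta hτ hr)
  rw [this]
  intro u
  refine DifferentiableAt.mul ?_ ?_
  · unfold xp; fun_prop
  · exact (differentiableAt_jacobiTheta₂_fst _ (im_sigma hτ)).comp u
      (f := fun u : ℂ => -u / (r * τ) + 1 / 2 - (-1 / τ) / 2) (by fun_prop)

lemma br_ev {τ : ℂ} {r : ℝ} (hτ : 0 < τ.im) (hr : 0 < r) (h1 : br τ r 1 ≠ 0) (u : ℂ) :
    ∀ᶠ w in nhdsWithin u {u}ᶜ, br τ r w ≠ 0 := by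
  have han : AnalyticOnNhd ℂ (br τ r) Set.univ := fun x _ => (br_diff hτ hr).analyticAt x
  rcases (han u trivial).eventually_eq_zero_or_eventually_ne_zero with h | h
  · exact absurd (han.eqOn_zero_of_preconnected_of_eventuallyEq_zero isPreconnected_univ trivial h
      (Set.mem_univ (1 : ℂ))) h1
  · exact h


def pf (f : ℂ → ℂ) (u : ℂ) (n : ℕ) : ℂ := ∏ j ∈ Finset.range n, f (u + (j : ℂ))

lemma pf_zero (f : ℂ → ℂ) (u : ℂ) : pf f u 0 = 1 := by simp [pf]

lemma pf_succ (f : ℂ → ℂ) (u : ℂ) (n : ℕ) : pf f u (n + 1) = pf f u n * f (u + n) :=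
  Finset.prod_range_succ _ _

lemma pf_add (f : ℂ → ℂ) (u : ℂ) (m n : ℕ) : pf f u (m + n) = pf f u m * pf f (u + m) n := by
  unfold pf
  rw [Finset.prod_range_add]
  congr 1
  refine Finset.prod_congr rfl fun j _ => ?_
  push_cast
  rw [add_assoc]

lemma pf_succ' (f : ℂ → ℂ) (u : ℂ) (n : ℕ) : pf f u (n + 1) = f u * pf f (u + 1) n := by
  rw [add_comm n 1, pf_add]
  simp [pf]

lemma pf_rev {f : ℂ → ℂ} (hf : ∀ u, f (-u) = -f u) (y w : ℂ) (n : ℕ) (h : w = 1 - n - y) :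
    pf f w n = (-1) ^ n * pf f y n := by
  induction n generalizing w with
  | zero => simp [pf]
  | succ n ih =>
    rw [pf_succ', ih (w + 1) (by rw [h]; push_cast; ring), pf_succ]
    have : w = -(y + n) := by rw [h]; push_cast; ring
    rw [this, hf]
    ring

lemma pf_ne {f : ℂ → ℂ} {u : ℂ} {n : ℕ} (h : ∀ j < n, f (u + (j : ℂ)) ≠ 0) : pf f u n ≠ 0 :=
  Finset.prod_ne_zero_iff.mpr fun j hj => h j (Finset.mem_range.mp hj)

/-- the expansion coefficient -/
def cc (f : ℂ → ℂ) (α β γ : ℂ) (n m : ℕ) : ℂ :=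
  pf f 1 (n + m) / (pf f 1 n * pf f 1 m) *
    (pf f (α - γ) n * pf f (α + γ + m) n * pf f (α - β) m * pf f (α + β + n) m) /
    (pf f (β - γ - m) n * pf f (γ - β - n) m * pf f (β + γ) (n + m))

def cA (f : ℂ → ℂ) (α β γ : ℂ) (n m : ℕ) : ℂ :=
  (f (α + γ + n + 2 * m) * f (α - γ + n)) / (f (β + γ + n + m) * f (β - γ + n - m))

def cB (f : ℂ → ℂ) (α β γ : ℂ) (n m : ℕ) : ℂ :=
  (f (α + β + 2 * n + m) * f (α - β + m)) / (f (β + γ + n + m) * f (γ - β + m - n))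

lemma alg_pascal {q0 q1 q2 gN gn gm X x1 P3 y1 y0 Z z1 P4 w1 w0 Q Q' d1 P P' e1 S s1 h0 h1 h2 v1 v2 : ℂ}
    (hq1 : q1 ≠ 0) (hq2 : q2 ≠ 0) (hgn : gn ≠ 0) (hgm : gm ≠ 0) (hQ : Q ≠ 0) (hP : P ≠ 0)
    (hd : d1 ≠ 0) (he : e1 ≠ 0) (hS : S ≠ 0) (hs : s1 ≠ 0) (hh0 : h0 ≠ 0) (hh1 : h1 ≠ 0)
    (hh2 : h2 ≠ 0) (hQ' : Q' * h1 = d1 * Q) (hP' : P' * h2 = e1 * P)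
    (key : gN * h0 * y1 * w1 = gm * d1 * y0 * v2 + gn * e1 * w0 * v1) :
    (q0 * gN) / ((q1 * gn) * (q2 * gm)) * ((X * x1) * (P3 * y1) * (Z * z1) * (P4 * w1)) /
      ((d1 * Q) * (-e1 * P) * (S * s1)) =
    q0 / (q1 * (q2 * gm)) * (X * P3 * (Z * z1) * (w0 * P4)) / (Q' * (P * -h0) * S) *
      (v1 * x1 / (s1 * h1)) +
    q0 / ((q1 * gn) * q2) * ((X * x1) * (y0 * P3) * Z * P4) / ((Q * h0) * P' * S) *
      (v2 * z1 / (s1 * -h2)) := by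
  have e1' : Q' = d1 * Q / h1 := by field_simp; exact hQ'
  have e2' : P' = e1 * P / h2 := by field_simp; exact hP'
  rw [e1', e2']
  field_simp
  linear_combination (-(q0*X*x1*P3*Z*z1*P4)) * key

lemma pascal {f : ℂ → ℂ} (hf : ∀ u, f (-u) = -f u)
    (hpl : ∀ a b c d, f (a + d) * f (a - d) * (f (b + c) * f (b - c)) =
      f (b + d) * f (b - d) * (f (a + c) * f (a - c)) -
      f (c + d) * f (c - d) * (f (a + b) * f (a - b)))
    (α β γ : ℂ) (n m : ℕ)
    (hone : ∀ i : ℕ, i < n + m + 2 → f (1 + i) ≠ 0)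
    (hD : ∀ i : ℤ, -(n + m + 2) ≤ i → i ≤ n + m + 2 → f (β - γ + i) ≠ 0)
    (hS : ∀ i : ℕ, i < n + m + 2 → f (β + γ + i) ≠ 0) :
    cc f α β γ (n + 1) (m + 1) =
      cc f α β γ n (m + 1) * cA f α β γ n (m + 1) +
      cc f α β γ (n + 1) m * cB f α β γ (n + 1) m := by
  have hD' : ∀ (u : ℂ) (i : ℤ), u = β - γ + i → -(n + m + 2) ≤ i → i ≤ n + m + 2 → f u ≠ 0 := by
    rintro u i rfl h1 h2; exact hD i h1 h2
  have hDn' : ∀ (u : ℂ) (i : ℤ), u = -(β - γ + i) → -(n + m + 2) ≤ i → i ≤ n + m + 2 → f u ≠ 0 := by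
    rintro u i rfl h1 h2; rw [hf]; exact neg_ne_zero.mpr (hD i h1 h2)
  unfold cc cA cB
  have r1 : pf f 1 (n + 1 + (m + 1)) = pf f 1 (n + m + 1) * f (n + m + 2) := by
    rw [show n + 1 + (m + 1) = n + m + 1 + 1 by ring, pf_succ]; push_cast; ring_nf
  have r2 : pf f (β + γ) (n + 1 + (m + 1)) = pf f (β + γ) (n + m + 1) * f (β + γ + n + m + 1) := by
    rw [show n + 1 + (m + 1) = n + m + 1 + 1 by ring, pf_succ]; push_cast; ring_nf
  have r3 : pf f (α + γ + (m + 1 : ℕ)) (n + 1) =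
      pf f (α + γ + m + 1) n * f (α + γ + n + m + 1) := by
    rw [pf_succ]; push_cast; ring_nf
  have r4 : pf f (α + β + (n + 1 : ℕ)) (m + 1) =
      pf f (α + β + n + 1) m * f (α + β + n + m + 1) := by
    rw [pf_succ]; push_cast; ring_nf
  have r5 : pf f (β - γ - (m + 1 : ℕ)) (n + 1) = f (β - γ - m - 1) * pf f (β - γ - m) n := by
    rw [pf_succ']; push_cast; ring_nf
  have r6 : pf f (γ - β - (n + 1 : ℕ)) (m + 1) = -f (β - γ + n + 1) * pf f (γ - β - n) m := by
    rw [pf_succ', ← hf]; push_cast; ring_nf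
  have r7 : pf f (α + γ + (m + 1 : ℕ)) n = pf f (α + γ + m + 1) n := by push_cast; ring_nf
  have r8 : pf f (α + β + n) (m + 1) = f (α + β + n) * pf f (α + β + n + 1) m := pf_succ' _ _ _
  have r9 : pf f (γ - β - n) (m + 1) = pf f (γ - β - n) m * -f (β - γ + n - m) := by
    rw [pf_succ, ← hf]; ring_nf
  have r10 : pf f (α + γ + m) (n + 1) = f (α + γ + m) * pf f (α + γ + m + 1) n := pf_succ' _ _ _
  have r11 : pf f (α + β + (n + 1 : ℕ)) m = pf f (α + β + n + 1) m := by push_cast; ring_nf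
  have r12 : pf f (β - γ - m) (n + 1) = pf f (β - γ - m) n * f (β - γ + n - m) := by
    rw [pf_succ]; ring_nf
  have s1 : f (α + γ + n + 2 * (m + 1 : ℕ)) = f (α + γ + n + 2 * m + 2) := by
    congr 1; push_cast; ring
  have s2 : f (β + γ + n + (m + 1 : ℕ)) = f (β + γ + n + m + 1) := by congr 1; push_cast; ring
  have s3 : f (β + γ + (n + 1 : ℕ) + m) = f (β + γ + n + m + 1) := by congr 1; push_cast; ring
  have s4 : f (β - γ + n - (m + 1 : ℕ)) = f (β - γ + n - m - 1) := by congr 1; push_cast; ring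
  have s5 : f (α + β + 2 * (n + 1 : ℕ) + m) = f (α + β + 2 * n + m + 2) := by
    congr 1; push_cast; ring
  have s6 : f (γ - β + m - (n + 1 : ℕ)) = -f (β - γ + n - m + 1) := by
    rw [← hf]; congr 1; push_cast; ring
  rw [show n + (m + 1) = n + m + 1 by ring, show n + 1 + m = n + m + 1 by ring]
  rw [r1, r2, r3, r4, r5, r6, r7, r8, r9, r10, r11, r12, s1, s2, s3, s4, s5, s6]
  rw [pf_succ f 1 n, pf_succ f 1 m, pf_succ f (α - γ) n, pf_succ f (α - β) m]
  apply alg_pascal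
  · exact pf_ne fun j hj => hone j (by omega)
  · exact pf_ne fun j hj => hone j (by omega)
  · exact hone n (by omega)
  · exact hone m (by omega)
  · exact pf_ne fun j hj => hD' _ (-m + j) (by push_cast; ring) (by omega) (by omega)
  · exact pf_ne fun j hj => hDn' _ (n - j) (by push_cast; ring) (by omega) (by omega)
  · exact hD' _ (-m - 1) (by push_cast; ring) (by omega) (by omega)
  · exact hD' _ (n + 1) (by push_cast; ring) (by omega) (by omega)
  · exact pf_ne fun j hj => hS j (by omega)
  · have := hS (n + m + 1) (by omega)
    convert this using 2; push_cast; ring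
  · exact hD' _ (n - m) (by push_cast; ring) (by omega) (by omega)
  · exact hD' _ (n - m - 1) (by push_cast; ring) (by omega) (by omega)
  · exact hD' _ (n - m + 1) (by push_cast; ring) (by omega) (by omega)
  · have h1 := pf_succ f (β - γ - (m + 1 : ℕ)) n
    rw [r5] at h1
    rw [h1]
    congr 2; push_cast; ring
  · have h1 := pf_succ f (γ - β - (n + 1 : ℕ)) m
    rw [r6, show γ - β - ((n + 1 : ℕ) : ℂ) + m = -(β - γ + n - m + 1) by push_cast; ring, hf] at h1
    linear_combination h1
  · have := hpl (α + (β + γ) / 2 + (n + m + 1)) ((β - γ) / 2 + n + 1) ((β - γ) / 2 - m - 1)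
      ((β - γ) / 2)
    have t1 : f ((β - γ) / 2 - m - 1 - (β - γ) / 2) = -f (1 + m) := by
      rw [← hf]; congr 1; ring
    rw [t1] at this
    ring_nf at this ⊢
    linear_combination this

lemma pascal0 {f : ℂ → ℂ} (α β γ : ℂ) (m : ℕ)
    (hone : ∀ i : ℕ, i < m + 1 → f (1 + i) ≠ 0) :
    cc f α β γ 0 (m + 1) = cc f α β γ 0 m * cB f α β γ 0 m := by
  unfold cc cB
  simp only [pf_zero, zero_add, Nat.cast_zero, add_zero, sub_zero, mul_zero, one_mul]
  have a1 : pf f 1 (m + 1) ≠ 0 := pf_ne fun j hj => hone j (by omega)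
  have a2 : pf f 1 m ≠ 0 := pf_ne fun j hj => hone j (by omega)
  rw [div_self a1, div_self a2, pf_succ f (α - β), pf_succ f (α + β), pf_succ f (γ - β),
    pf_succ f (β + γ)]
  rw [div_mul_div_comm]
  congr 1 <;> ring

lemma pascal0' {f : ℂ → ℂ} (α β γ : ℂ) (m : ℕ)
    (hone : ∀ i : ℕ, i < m + 1 → f (1 + i) ≠ 0) :
    cc f α β γ (m + 1) 0 = cc f α β γ m 0 * cA f α β γ m 0 := by
  unfold cc cA
  simp only [pf_zero, add_zero, Nat.cast_zero, sub_zero, mul_zero, mul_one]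
  have a1 : pf f 1 (m + 1) ≠ 0 := pf_ne fun j hj => hone j (by omega)
  have a2 : pf f 1 m ≠ 0 := pf_ne fun j hj => hone j (by omega)
  rw [div_self a1, div_self a2, pf_succ f (α - γ), pf_succ f (α + γ), pf_succ f (β - γ),
    pf_succ f (β + γ)]
  rw [div_mul_div_comm]
  congr 1 <;> ring

def hh (f : ℂ → ℂ) (x a : ℂ) (n : ℕ) : ℂ := pf f (a + x) n * pf f (a - x) n

lemma hh_succ (f : ℂ → ℂ) (x a : ℂ) (n : ℕ) :
    hh f x a (n + 1) = hh f x a n * (f (a + n + x) * f (a + n - x)) := by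
  unfold hh
  rw [pf_succ, pf_succ, show a + x + n = a + n + x by ring, show a - x + n = a + n - x by ring]
  ring

lemma expansion {f : ℂ → ℂ} (hf : ∀ u, f (-u) = -f u)
    (hpl : ∀ a b c d, f (a + d) * f (a - d) * (f (b + c) * f (b - c)) =
      f (b + d) * f (b - d) * (f (a + c) * f (a - c)) -
      f (c + d) * f (c - d) * (f (a + b) * f (a - b)))
    (α β γ x : ℂ) (k : ℕ)
    (hone : ∀ i : ℕ, i < k → f (1 + i) ≠ 0)
    (hD : ∀ i : ℤ, -k ≤ i → i ≤ k → f (β - γ + i) ≠ 0)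
    (hS : ∀ i : ℕ, i < k → f (β + γ + i) ≠ 0) :
    hh f x α k = ∑ q ∈ Finset.HasAntidiagonal.antidiagonal k,
      cc f α β γ q.1 q.2 * (hh f x β q.1 * hh f x γ q.2) := by
  induction k with
  | zero => simp [hh, cc, pf]
  | succ k ih =>
    have ih' := ih (fun i hi => hone i (by omega))
      (fun i h1 h2 => hD i (by push_cast; omega) (by push_cast; omega)) (fun i hi => hS i (by omega))
    rw [hh_succ, ih', Finset.sum_mul]
    let g1 : ℕ → ℕ → ℂ := fun n m => match n with
      | 0 => 0
      | n + 1 => cc f α β γ n m * cA f α β γ n m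
    let g2 : ℕ → ℕ → ℂ := fun n m => match m with
      | 0 => 0
      | m + 1 => cc f α β γ n m * cB f α β γ n m
    have hc : ∀ q ∈ Finset.HasAntidiagonal.antidiagonal (k + 1), cc f α β γ q.1 q.2 * (hh f x β q.1 * hh f x γ q.2)
        = g1 q.1 q.2 * (hh f x β q.1 * hh f x γ q.2) + g2 q.1 q.2 * (hh f x β q.1 * hh f x γ q.2) := by
      rintro ⟨n, m⟩ hq
      rw [Finset.HasAntidiagonal.mem_antidiagonal] at hq
      simp only at hq ⊢
      rw [← add_mul]
      congr 1
      rcases n with _ | n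
      · rcases m with _ | m
        · omega
        · simp only [g1, g2, zero_add]
          exact pascal0 α β γ m fun i hi => hone i (by omega)
      · rcases m with _ | m
        · simp only [g1, g2, add_zero]
          exact pascal0' α β γ n fun i hi => hone i (by omega)
        · simp only [g1, g2]
          exact pascal hf hpl α β γ n m (fun i hi => hone i (by omega))
            (fun i h1 h2 => hD i (by push_cast; omega) (by push_cast; omega))
            (fun i hi => hS i (by omega))
    rw [Finset.sum_congr rfl hc, Finset.sum_add_distrib, Finset.Nat.sum_antidiagonal_succ,
      Finset.Nat.sum_antidiagonal_succ' (f := fun q : ℕ × ℕ => g2 q.1 q.2 * _)]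
    simp only [g1, g2, zero_mul, zero_add, add_zero]
    rw [← Finset.sum_add_distrib]
    refine Finset.sum_congr rfl ?_
    rintro ⟨n, m⟩ hq
    rw [Finset.HasAntidiagonal.mem_antidiagonal] at hq
    simp only at hq ⊢
    rw [hh_succ, hh_succ]
    have hk : (k : ℂ) = n + m := by rw [← hq]; push_cast; rfl
    have n1 : f (β + γ + n + m) ≠ 0 := by
      have := hS (n + m) (by omega)
      convert this using 2; push_cast; ring
    have n2 : f (β - γ + n - m) ≠ 0 := by
      have := hD (n - m) (by push_cast; omega) (by push_cast; omega)
      convert this using 2; push_cast; ring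
    have key : f (α + k + x) * f (α + k - x) = cA f α β γ n m * (f (β + n + x) * f (β + n - x)) +
        cB f α β γ n m * (f (γ + m + x) * f (γ + m - x)) := by
      have := hpl (α + k) (β + n) (γ + m) x
      unfold cA cB
      rw [hk] at this ⊢
      rw [show γ - β + m - n = -(β - γ + n - m) by ring, hf]
      rw [show β + n + (γ + m) = β + γ + n + m by ring, show β + n - (γ + m) = β - γ + n - m by ring,
        show α + (n + m) + (γ + m) = α + γ + n + 2 * m by ring,
        show α + (n + m) - (γ + m) = α - γ + n by ring,
        show α + (n + m) + (β + n) = α + β + 2 * n + m by ring,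
        show α + (n + m) - (β + n) = α - β + m by ring] at this
      rw [mul_comm (2 : ℂ) (m : ℂ), mul_comm (2 : ℂ) (n : ℂ)] at this
      field_simp
      linear_combination this
    rw [key]
    ring


lemma D_ident {f : ℂ → ℂ} (hf : ∀ u, f (-u) = -f u) (β γ : ℂ) (n m : ℕ) :
    f (β - γ - (n + m : ℕ) + 2 * n) * pf f (β - γ - (n + m : ℕ)) n * pf f (β - γ - m) n *
      pf f (γ - β - n) m =
    f (β - γ - (n + m : ℕ)) * pf f (γ - β) (n + m) * pf f (γ - β - n) n := by
  have e1 := pf_succ f (β - γ - (n + m : ℕ)) (n + n)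
  rw [pf_succ', pf_add f (β - γ - (n + m : ℕ)) n n,
    show β - γ - ((n + m : ℕ) : ℂ) + n = β - γ - m by push_cast; ring,
    show β - γ - ((n + m : ℕ) : ℂ) + (n + n : ℕ) = β - γ - (n + m : ℕ) + 2 * n by push_cast; ring,
    pf_rev hf (γ - β - n + m) _ (n + n) (by push_cast; ring)] at e1
  have e2 := pf_add f (γ - β - n) m (n + n)
  rw [show m + (n + n) = n + (n + m) by ring, pf_add f _ n (n + m),
    show γ - β - (n : ℂ) + n = γ - β by ring] at e2
  have e3 : (-1 : ℂ) ^ (n + n) = 1 := Even.neg_one_pow ⟨n, rfl⟩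
  rw [e3] at e1
  linear_combination (-pf f (γ - β - n) m) * e1 - f (β - γ - (n + m : ℕ)) * e2

lemma alg_term {A a0 U gn gm G V0 X Y W Z B1 B2 E1 E2 Ya Zb Q P S K C1 C2 s : ℂ}
    (hs : s * s = 1) (hA : A * U * Q * P = a0 * K * V0)
    (ha0 : a0 ≠ 0) (hgn : gn ≠ 0) (hgm : gm ≠ 0) (hV0 : V0 ≠ 0)
    (hQ : Q ≠ 0) (hP : P ≠ 0) (hS : S ≠ 0)
    (hYY : Ya * Y ≠ 0) (hZZ : Z * Zb ≠ 0) (hCE1 : C1 * E1 ≠ 0) (hCE2 : C2 * E2 ≠ 0) :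
    A / a0 * (U / gn) * ((s * G) / (s * V0) * (X / (s * Y) * ((s * W) / Z *
      (B1 / (s * E1) * (B2 / (s * E2)))))) =
    (gm * G) / (gn * gm) * (X * W * Ya * Zb) / (Q * P * S) * ((B1 * B2) * (C1 * C2)) *
      ((K * S) / ((Ya * Y) * (Z * Zb) * (C1 * E1) * (C2 * E2))) := by
  have hs0 : s ≠ 0 := by rintro rfl; simp at hs
  have hK : K = A * U * Q * P / (a0 * V0) := by
    field_simp; linear_combination -hA
  have h1 := left_ne_zero_of_mul hYY
  have h2 := right_ne_zero_of_mul hYY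
  have h3 := left_ne_zero_of_mul hZZ
  have h4 := right_ne_zero_of_mul hZZ
  have h5 := left_ne_zero_of_mul hCE1
  have h6 := right_ne_zero_of_mul hCE1
  have h7 := left_ne_zero_of_mul hCE2
  have h8 := right_ne_zero_of_mul hCE2
  have hs2 : s ^ 2 = 1 := by rw [sq]; exact hs
  rw [hK]
  field_simp
  try rw [hs2]
  try ring

/-- the general summand -/
def tt (f : ℂ → ℂ) (k : ℕ) (α β γ x : ℂ) (j : ℕ) : ℂ :=
  f (β - γ - k + 2 * j) / f (β - γ - k) * (pf f (β - γ - k) j / pf f 1 j) *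
    (pf f (-k) j / pf f (β - γ - k + 1 - -k) j * (pf f (α - γ) j / pf f (β - γ - k + 1 - (α - γ)) j *
      (pf f (-α - γ + 1 - k) j / pf f (β - γ - k + 1 - (-α - γ + 1 - k)) j *
      (pf f (β + x) j / pf f (β - γ - k + 1 - (β + x)) j *
      (pf f (β - x) j / pf f (β - γ - k + 1 - (β - x)) j)))))

lemma term_id {f : ℂ → ℂ} (hf : ∀ u, f (-u) = -f u) (α β γ x : ℂ) (n m : ℕ)
    (hone : ∀ i : ℕ, i < n + m → f (1 + i) ≠ 0)
    (hD : ∀ i : ℤ, -(n + m : ℕ) ≤ i → i ≤ (n + m : ℕ) → f (β - γ + i) ≠ 0)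
    (hS : ∀ i : ℕ, i < n + m → f (β + γ + i) ≠ 0)
    (h3 : pf f (α - β) (n + m) ≠ 0) (h4 : pf f (α + β) (n + m) ≠ 0)
    (h5 : pf f (γ + x) (n + m) ≠ 0) (h6 : pf f (γ - x) (n + m) ≠ 0) :
    tt f (n + m) α β γ x n = cc f α β γ n m * (hh f x β n * hh f x γ m) *
      ((pf f (γ - β) (n + m) * pf f (γ + β) (n + m)) /
        (pf f (α - β) (n + m) * pf f (α + β) (n + m) * pf f (γ + x) (n + m) *
          pf f (γ - x) (n + m))) := by
  have hD' : ∀ (u : ℂ) (i : ℤ), u = β - γ + i → -(n + m : ℕ) ≤ i → i ≤ (n + m : ℕ) → f u ≠ 0 := by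
    rintro u i rfl h1 h2; exact hD i h1 h2
  have hDn' : ∀ (u : ℂ) (i : ℤ), u = -(β - γ + i) → -(n + m : ℕ) ≤ i → i ≤ (n + m : ℕ) →
      f u ≠ 0 := by
    rintro u i rfl h1 h2; rw [hf]; exact neg_ne_zero.mpr (hD i h1 h2)
  have hA := D_ident hf β γ n m
  have q1 : pf f 1 (n + m) = pf f 1 m * pf f (1 + m) n := by rw [add_comm n m, pf_add]
  have q2 : pf f (α - β) (n + m) = pf f (α - β) m * pf f (α - β + m) n := by
    rw [add_comm n m, pf_add]
  have q3 : pf f (α + β) (n + m) = pf f (α + β) n * pf f (α + β + n) m := pf_add _ _ _ _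
  have q4 : pf f (γ + x) (n + m) = pf f (γ + x) m * pf f (γ + x + m) n := by
    rw [add_comm n m, pf_add]
  have q5 : pf f (γ - x) (n + m) = pf f (γ - x) m * pf f (γ - x + m) n := by
    rw [add_comm n m, pf_add]
  rw [q2] at h3
  rw [q3] at h4
  rw [q4] at h5
  rw [q5] at h6
  unfold tt cc hh
  rw [pf_rev hf (1 + m) (-((n + m : ℕ) : ℂ)) n (by push_cast; ring),
    pf_rev hf (γ - β - n) (β - γ - ((n + m : ℕ) : ℂ) + 1 - -((n + m : ℕ) : ℂ)) n (by push_cast; ring),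
    pf_rev hf (α - β + m) (β - γ - ((n + m : ℕ) : ℂ) + 1 - (α - γ)) n (by push_cast; ring),
    pf_rev hf (α + γ + m) (-α - γ + 1 - ((n + m : ℕ) : ℂ)) n (by push_cast; ring),
    show β - γ - ((n + m : ℕ) : ℂ) + 1 - (-α - γ + 1 - ((n + m : ℕ) : ℂ)) = α + β by ring,
    pf_rev hf (γ + x + m) (β - γ - ((n + m : ℕ) : ℂ) + 1 - (β + x)) n (by push_cast; ring),
    pf_rev hf (γ - x + m) (β - γ - ((n + m : ℕ) : ℂ) + 1 - (β - x)) n (by push_cast; ring),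
    q1, q2, q3, q4, q5, add_comm γ β]
  apply alg_term
  · rw [← pow_add]; exact Even.neg_one_pow ⟨n, rfl⟩
  · exact hA
  · exact hD' _ (-(n + m : ℕ)) (by push_cast; ring) (by omega) (by omega)
  · exact pf_ne fun j hj => hone j (by omega)
  · exact pf_ne fun j hj => hone j (by omega)
  · exact pf_ne fun j hj => hDn' _ (n - j) (by push_cast; ring) (by omega) (by omega)
  · exact pf_ne fun j hj => hD' _ (-m + j) (by push_cast; ring) (by omega) (by omega)
  · exact pf_ne fun j hj => hDn' _ (n - j) (by push_cast; ring) (by omega) (by omega)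
  · exact pf_ne fun j hj => hS j (by omega)
  · exact h3
  · exact h4
  · exact h5
  · exact h6

lemma generic_jackson {f : ℂ → ℂ} (hf : ∀ u, f (-u) = -f u)
    (hpl : ∀ a b c d, f (a + d) * f (a - d) * (f (b + c) * f (b - c)) =
      f (b + d) * f (b - d) * (f (a + c) * f (a - c)) -
      f (c + d) * f (c - d) * (f (a + b) * f (a - b)))
    (α β γ x : ℂ) (k : ℕ)
    (hone : ∀ i : ℕ, i < k → f (1 + i) ≠ 0)
    (hD : ∀ i : ℤ, -k ≤ i → i ≤ k → f (β - γ + i) ≠ 0)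
    (hS : ∀ i : ℕ, i < k → f (β + γ + i) ≠ 0)
    (h3 : pf f (α - β) k ≠ 0) (h4 : pf f (α + β) k ≠ 0)
    (h5 : pf f (γ + x) k ≠ 0) (h6 : pf f (γ - x) k ≠ 0) :
    ∑ j ∈ Finset.range (k + 1), tt f k α β γ x j =
      pf f (γ - β) k * pf f (γ + β) k * pf f (α + x) k * pf f (α - x) k /
        (pf f (α - β) k * pf f (α + β) k * pf f (γ + x) k * pf f (γ - x) k) := by
  have h := expansion hf hpl α β γ x k hone hD hS
  have e : ∑ j ∈ Finset.range (k + 1), tt f k α β γ x j =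
      ∑ q ∈ Finset.HasAntidiagonal.antidiagonal k, tt f k α β γ x q.1 :=
    (Finset.Nat.sum_antidiagonal_eq_sum_range_succ (fun n _ => tt f k α β γ x n) k).symm
  rw [e]
  have e2 : ∀ q ∈ Finset.HasAntidiagonal.antidiagonal k, tt f k α β γ x q.1 =
      cc f α β γ q.1 q.2 * (hh f x β q.1 * hh f x γ q.2) *
      ((pf f (γ - β) k * pf f (γ + β) k) /
        (pf f (α - β) k * pf f (α + β) k * pf f (γ + x) k * pf f (γ - x) k)) := by
    rintro ⟨n, m⟩ hq
    rw [Finset.HasAntidiagonal.mem_antidiagonal] at hq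
    simp only at hq ⊢
    subst hq
    exact term_id hf α β γ x n m hone hD hS h3 h4 h5 h6
  rw [Finset.sum_congr rfl e2, ← Finset.sum_mul, ← h]
  unfold hh
  ring

lemma pf_contAt {f g : ℂ → ℂ} (hf : Continuous f) (hg : Continuous g) (n : ℕ) (c : ℂ) :
    ContinuousAt (fun w => pf f (g w) n) c := by
  unfold pf
  apply Continuous.continuousAt
  fun_prop


/-- Elliptic Jackson summation (Frenkel-Turaev). -/
theorem elliptic_jackson (τ : ℂ) (r : ℝ) (hτ : 0 < τ.im) (hr : 0 < r)
    (k : ℕ) (α β γ z : ℂ)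
    (h0 : br τ r (β - γ - (k : ℂ)) ≠ 0)
    (h1 : ∀ j ≤ k, brF τ r 1 j ≠ 0)
    (h2 : ∀ ui ∈ [-(k : ℂ), α - γ, -α - γ + 1 - (k : ℂ), β + (r : ℂ) * z, β - (r : ℂ) * z],
      ∀ j ≤ k, brF τ r (β - γ - (k : ℂ) + 1 - ui) j ≠ 0)
    (h3 : brF τ r (α - β) k ≠ 0) (h4 : brF τ r (α + β) k ≠ 0)
    (h5 : brF τ r (γ + (r : ℂ) * z) k ≠ 0) (h6 : brF τ r (γ - (r : ℂ) * z) k ≠ 0) :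
    Vsum τ r (β - γ - (k : ℂ))
        [-(k : ℂ), α - γ, -α - γ + 1 - (k : ℂ), β + (r : ℂ) * z, β - (r : ℂ) * z] k =
      brF τ r (γ - β) k * brF τ r (γ + β) k * brF τ r (α + (r : ℂ) * z) k *
          brF τ r (α - (r : ℂ) * z) k /
        (brF τ r (α - β) k * brF τ r (α + β) k * brF τ r (γ + (r : ℂ) * z) k *
          brF τ r (γ - (r : ℂ) * z) k) := by
  set x : ℂ := (r : ℂ) * z with hx
  rcases Nat.eq_zero_or_pos k with hk | hk
  · subst hk
    simp only [Nat.cast_zero] at h0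
    simp [Vsum, brF, div_self, h0] 
    simpa using h0
  have hf := br_neg hτ hr
  have hpl := br_plucker hτ hr
  have hc : Continuous (br τ r) := (br_diff hτ hr).continuous
  have hb1 : br τ r 1 ≠ 0 := by
    have := h1 1 hk
    simpa [brF] using this
  have hev := br_ev hτ hr hb1
  have hone : ∀ i : ℕ, i < k → br τ r (1 + i) ≠ 0 := fun i hi =>
    Finset.prod_ne_zero_iff.mp (h1 k le_rfl) i (Finset.mem_range.mpr hi)
  have hV : ∀ γ' : ℂ, Vsum τ r (β - γ' - (k : ℂ))
      [-(k : ℂ), α - γ', -α - γ' + 1 - (k : ℂ), β + x, β - x] k =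
      ∑ j ∈ Finset.range (k + 1), tt (br τ r) k α β γ' x j := by
    intro γ'
    unfold Vsum tt
    refine Finset.sum_congr rfl fun j _ => ?_
    simp only [List.map_cons, List.map_nil, List.prod_cons, List.prod_nil, mul_one]
    rfl
  rw [hV]
  let R : ℂ → ℂ := fun γ' => pf (br τ r) (γ' - β) k * pf (br τ r) (γ' + β) k *
    pf (br τ r) (α + x) k * pf (br τ r) (α - x) k /
    (pf (br τ r) (α - β) k * pf (br τ r) (α + β) k * pf (br τ r) (γ' + x) k *
      pf (br τ r) (γ' - x) k)
  change _ = R γ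
  have hE : ∀ᶠ γ' in nhdsWithin γ {γ}ᶜ,
      ∑ j ∈ Finset.range (k + 1), tt (br τ r) k α β γ' x j = R γ' := by
    have c1 : ∀ᶠ γ' in nhdsWithin γ {γ}ᶜ, ∀ i ∈ Finset.Icc (-(k : ℤ)) k,
        br τ r (β - γ' + i) ≠ 0 := by
      rw [Filter.eventually_all_finset]
      intro i _
      have ht : Filter.Tendsto (fun γ' : ℂ => β - γ' + i) (nhdsWithin γ {γ}ᶜ)
          (nhdsWithin (β - γ + i) {β - γ + i}ᶜ) := by
        refine tendsto_nhdsWithin_iff.mpr ⟨?_, ?_⟩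
        · have : Continuous (fun γ' : ℂ => β - γ' + i) := by fun_prop
          exact this.continuousAt.tendsto.mono_left nhdsWithin_le_nhds
        · filter_upwards [self_mem_nhdsWithin] with w hw h
          apply hw
          simp only [Set.mem_singleton_iff] at h ⊢
          linear_combination -h
      exact ht.eventually (hev _)
    have c2 : ∀ᶠ γ' in nhdsWithin γ {γ}ᶜ, ∀ i ∈ Finset.range k,
        br τ r (β + γ' + i) ≠ 0 := by
      rw [Filter.eventually_all_finset]
      intro i _
      have ht : Filter.Tendsto (fun γ' : ℂ => β + γ' + i) (nhdsWithin γ {γ}ᶜ)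
          (nhdsWithin (β + γ + i) {β + γ + i}ᶜ) := by
        refine tendsto_nhdsWithin_iff.mpr ⟨?_, ?_⟩
        · have : Continuous (fun γ' : ℂ => β + γ' + i) := by fun_prop
          exact this.continuousAt.tendsto.mono_left nhdsWithin_le_nhds
        · filter_upwards [self_mem_nhdsWithin] with w hw h
          apply hw
          simp only [Set.mem_singleton_iff] at h ⊢
          linear_combination h
      exact ht.eventually (hev _)
    have c5 : ∀ᶠ γ' in nhdsWithin γ {γ}ᶜ, pf (br τ r) (γ' + x) k ≠ 0 :=
      ((pf_contAt hc (by fun_prop : Continuous fun w : ℂ => w + x) k γ).eventually_ne h5).filter_mono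
        nhdsWithin_le_nhds
    have c6 : ∀ᶠ γ' in nhdsWithin γ {γ}ᶜ, pf (br τ r) (γ' - x) k ≠ 0 :=
      ((pf_contAt hc (by fun_prop : Continuous fun w : ℂ => w - x) k γ).eventually_ne h6).filter_mono
        nhdsWithin_le_nhds
    filter_upwards [c1, c2, c5, c6] with γ' d1 d2 d5 d6
    exact generic_jackson hf hpl α β γ' x k hone
      (fun i hi hi' => d1 i (Finset.mem_Icc.mpr ⟨hi, hi'⟩))
      (fun i hi => d2 i (Finset.mem_range.mpr hi)) h3 h4 d5 d6
  have hR : ContinuousAt R γ := by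
    have a1 := pf_contAt hc (by fun_prop : Continuous fun w : ℂ => w - β) k γ
    have a2 := pf_contAt hc (by fun_prop : Continuous fun w : ℂ => w + β) k γ
    have a3 := pf_contAt hc (by fun_prop : Continuous fun w : ℂ => w + x) k γ
    have a4 := pf_contAt hc (by fun_prop : Continuous fun w : ℂ => w - x) k γ
    have hne : pf (br τ r) (α - β) k * pf (br τ r) (α + β) k * pf (br τ r) (γ + x) k *
      pf (br τ r) (γ - x) k ≠ 0 := mul_ne_zero (mul_ne_zero (mul_ne_zero h3 h4) h5) h6
    exact (((a1.mul a2).mul continuousAt_const).mul continuousAt_const).div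
      ((continuousAt_const.mul a3).mul a4) hne
  have hL : ContinuousAt (fun γ' => ∑ j ∈ Finset.range (k + 1), tt (br τ r) k α β γ' x j) γ := by
    refine tendsto_finsetSum _ fun j hj => ?_
    have hj' : j ≤ k := by have := Finset.mem_range.mp hj; omega
    have cf : ∀ {g : ℂ → ℂ}, Continuous g → ContinuousAt (fun w => br τ r (g w)) γ :=
      fun hg => (hc.comp hg).continuousAt
    have cp : ∀ {g : ℂ → ℂ}, Continuous g → ContinuousAt (fun w => pf (br τ r) (g w) j) γ :=
      fun hg => pf_contAt hc hg j γ
    have b1 := h2 (-(k : ℂ)) (by simp) j hj'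
    have b2 := h2 (α - γ) (by simp) j hj'
    have b3 := h2 (-α - γ + 1 - (k : ℂ)) (by simp) j hj'
    have b4 := h2 (β + x) (by simp) j hj'
    have b5 := h2 (β - x) (by simp) j hj'
    have b0 := h1 j hj'
    unfold tt
    refine ContinuousAt.mul (ContinuousAt.mul (ContinuousAt.div (cf (by fun_prop)) (cf (by fun_prop)) h0)
      (ContinuousAt.div (cp (by fun_prop)) continuousAt_const b0))
      (ContinuousAt.mul (ContinuousAt.div continuousAt_const (cp (by fun_prop)) b1)
      (ContinuousAt.mul (ContinuousAt.div (cp (by fun_prop)) (cp (by fun_prop)) b2)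
      (ContinuousAt.mul (ContinuousAt.div (cp (by fun_prop)) (cp (by fun_prop)) b3)
      (ContinuousAt.mul (ContinuousAt.div continuousAt_const (cp (by fun_prop)) b4)
      (ContinuousAt.div continuousAt_const (cp (by fun_prop)) b5)))))
  have t1 := hL.tendsto.mono_left (nhdsWithin_le_nhds (s := {γ}ᶜ))
  have t2 := hR.tendsto.mono_left (nhdsWithin_le_nhds (s := {γ}ᶜ))
  exact tendsto_nhds_unique t1 (t2.congr' (hE.mono fun _ h => h.symm))

end Ell
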